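/- arXiv:2511.19214 — 2 statements merged into one kernel-verified Lean document; each statement's English description precedes it below -/
import Mathlib

section
/- Let A, B, C be points in the Euclidean plane with A ≠ B, C ≠ B and ∠ A B C = π/2, let D be the orthogonal projection of B onto the line through A and C, and let E be the orthogonal projection of D onto the line through B and C. Then (dist B D)² = dist A B · dist D E; that is, the first perpendicular BD is the geometric mean of the side AB and the second perpendicular DE. -/
open Real EuclideanGeometry

/-!
Put `B` at the origin and write `a = A - B`, `c = C - B`, so that `⟪a, c⟫ = 0`.  The point `D` of
the line `AC` is `D - B = (1 - t) a + t c`, and projecting onto the line `BC` kills the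
`a`-component, so `D - E = (1 - t) a`.  Since `D - B ⟂ c - a`, we have `⟪D - B, D - B⟫ =
⟪D - B, a⟫ = (1 - t) ‖a‖²`.  In particular `1 - t ≥ 0`, whence
`BD² = ‖a‖ · ((1 - t) ‖a‖) = AB · DE`.
-/

/-- The foot `F` of the perpendicular from `P` to the line `XY`, in vector form: `F` lies on the
line and `P - F` is orthogonal to its direction. -/
lemma foot_on_line {V : Type*} [NormedAddCommGroup V] [InnerProductSpace ℝ V]
    (P X Y F : V) (hF : F = EuclideanGeometry.orthogonalProjection (line[ℝ, X, Y]) P) :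
    (∃ r : ℝ, F = X + r • (Y - X)) ∧ inner ℝ (P - F) (Y - X) = 0 := by
  constructor
  · have h : F ∈ line[ℝ, X, Y] := by
      rw [hF]
      exact orthogonalProjection_mem P
    obtain ⟨r, hr⟩ := mem_affineSpan_pair_iff_exists_lineMap_eq.1 h
    refine ⟨r, ?_⟩
    rw [← hr, AffineMap.lineMap_apply, vsub_eq_sub, vadd_eq_add, add_comm]
  · have h := vsub_orthogonalProjection_mem_direction_orthogonal (line[ℝ, X, Y]) P
    rw [← hF] at h
    exact Submodule.inner_left_of_mem_orthogonal
      (AffineSubspace.vsub_mem_direction (right_mem_affineSpan_pair ℝ X Y)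
        (left_mem_affineSpan_pair ℝ X Y)) h

/-- In a right triangle `ABC` with the right angle at `B`, let `D` be the foot of the
perpendicular from `B` to the line `AC`, and `E` the foot of the perpendicular from `D`
to the line `BC`.  Then `BD² = AB · DE`, i.e. the first perpendicular `BD` is the
geometric mean of the side `AB` and the second perpendicular `DE`
(the paper's Equation (4)). -/
theorem sq_dist_first_perp_eq_side_mul_second_perp
    (A B C : EuclideanSpace ℝ (Fin 2)) (hAB : A ≠ B) (hCB : C ≠ B)
    (hright : ∠ A B C = π / 2)
    (D E : EuclideanSpace ℝ (Fin 2))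
    (hD : D = EuclideanGeometry.orthogonalProjection (line[ℝ, A, C]) B)
    (hE : E = EuclideanGeometry.orthogonalProjection (line[ℝ, B, C]) D) :
    (dist B D) ^ 2 = dist A B * dist D E := by
  obtain ⟨⟨t, ht⟩, hperpD⟩ := foot_on_line B A C D hD
  obtain ⟨⟨s, hs⟩, hperpE⟩ := foot_on_line D B C E hE
  have hac : inner ℝ (A - B) (C - B) = 0 :=
    InnerProductGeometry.inner_eq_zero_iff_angle_eq_pi_div_two _ _ |>.2 hright
  obtain ⟨a, rfl⟩ : ∃ a, A = B + a := ⟨A - B, by abel⟩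
  obtain ⟨c, rfl⟩ : ∃ c, C = B + c := ⟨C - B, by abel⟩
  simp only [add_sub_cancel_left] at hac hs hperpE
  have hca : inner ℝ c a = 0 := by rw [real_inner_comm, hac]
  have ha : a ≠ 0 := by simpa using hAB
  have hc : c ≠ 0 := by simpa using hCB
  have hBD : B - D = -((1 - t) • a + t • c) := by
    rw [ht]
    module
  have hDE : D - E = (1 - t) • a + (t - s) • c := by
    rw [ht, hs]
    module
  have hst : t - s = 0 := by
    rw [hDE, inner_add_left, real_inner_smul_left, real_inner_smul_left, hac, mul_zero,
      zero_add] at hperpE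
    exact (mul_eq_zero.1 hperpE).resolve_right (inner_self_ne_zero.2 hc)
  -- Orthogonality of `BD` and `AC` reads `t ‖c‖² = (1 - t) ‖a‖²`.
  have key : t * ‖c‖ ^ 2 = (1 - t) * ‖a‖ ^ 2 := by
    rw [hBD, add_sub_add_left_eq_sub] at hperpD
    simp only [inner_neg_left, inner_add_left, inner_sub_right, real_inner_smul_left, hac, hca,
      real_inner_self_eq_norm_sq] at hperpD
    linarith
  have hsq : dist B D ^ 2 = (1 - t) * ‖a‖ ^ 2 := by
    rw [dist_eq_norm, hBD, norm_neg, ← real_inner_self_eq_norm_sq]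
    simp only [inner_add_left, inner_add_right, real_inner_smul_left, real_inner_smul_right,
      hac, hca, real_inner_self_eq_norm_sq]
    simp only [norm_smul, mul_pow, Real.norm_eq_abs, sq_abs]
    linear_combination t * key
  have ht1 : 0 ≤ 1 - t := by
    refine nonneg_of_mul_nonneg_left (b := ‖a‖ ^ 2) ?_ (by positivity)
    rw [← hsq]
    positivity
  rw [hsq, dist_eq_norm, dist_eq_norm, hDE, hst, zero_smul, add_zero, norm_smul,
    Real.norm_of_nonneg ht1, add_sub_cancel_left]
  ring
end

section
/- Let A, B, C be points in the Euclidean plane with A ≠ B, C ≠ B and ∠ A B C = π/2, let D be the orthogonal projection of B onto the line through A and C, and let E be the orthogonal projection of D onto the line through B and C. Then dist D E = dist A B · (cos (∠ B C A))², and consequently cos (2 · ∠ B C A) = (2 · dist D E − dist A B) / dist A B. -/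
/-!
Write `u = A - B` and `v = C - B`, which are orthogonal, and `t = ‖v‖² / (‖u‖² + ‖v‖²)`, which is
`cos² C` by Pythagoras. The point `D` of `AC` with `D - B = t u + (1 - t) v` is
the foot of the perpendicular from `B`, since
`⟪t u + (1 - t) v, v - u⟫ = (1 - t) ‖v‖² - t ‖u‖² = 0`. Dropping the `u`-component gives
`E - B = (1 - t) v`, so `D - E = t u` and `DE = AB · cos² C`. The formula for `cos (2C)` is then
the double-angle formula.
-/

open Real EuclideanGeometry

/-- A point of the line `XY` from which the direction to `P` is orthogonal to `Y - X` is the foot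
of the perpendicular from `P`. -/
lemma orthogonalProjection_line_eq_lineMap (P X Y : EuclideanSpace ℝ (Fin 2)) (r : ℝ)
    (h : inner ℝ (Y - X) (P - AffineMap.lineMap X Y r) = 0) :
    (EuclideanGeometry.orthogonalProjection (line[ℝ, X, Y]) P : EuclideanSpace ℝ (Fin 2)) =
      AffineMap.lineMap X Y r := by
  rw [EuclideanGeometry.coe_orthogonalProjection_eq_iff_mem]
  refine ⟨AffineMap.lineMap_mem_affineSpan_pair _ _ _, ?_⟩
  rw [direction_affineSpan, Submodule.mem_orthogonal, vectorSpan_pair_rev]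
  intro w hw
  obtain ⟨k, rfl⟩ := Submodule.mem_span_singleton.1 hw
  rw [inner_smul_left, vsub_eq_sub, vsub_eq_sub, h, mul_zero]

/-- In a right triangle `ABC` with the right angle at `B`, let `D` be the foot of the
perpendicular from `B` to the line `AC`, and `E` the foot of the perpendicular from `D`
to the line `BC`.  Then `DE = AB · cos² C`, and consequently
`cos (2C) = (2·DE − AB) / AB` (the paper's Equation (6)). -/
theorem second_perp_eq_side_mul_cos_sq_and_cos_two_angle
    (A B C : EuclideanSpace ℝ (Fin 2)) (hAB : A ≠ B) (hCB : C ≠ B)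
    (hright : ∠ A B C = π / 2)
    (D E : EuclideanSpace ℝ (Fin 2))
    (hD : D = EuclideanGeometry.orthogonalProjection (line[ℝ, A, C]) B)
    (hE : E = EuclideanGeometry.orthogonalProjection (line[ℝ, B, C]) D) :
    dist D E = dist A B * (Real.cos (∠ B C A)) ^ 2 ∧
      Real.cos (2 * ∠ B C A) = (2 * dist D E - dist A B) / dist A B := by
  have hAB' : 0 < dist A B := dist_pos.2 hAB
  have hCB' : 0 < dist C B := dist_pos.2 hCB
  have hpyth := (dist_sq_eq_dist_sq_add_dist_sq_iff_angle_eq_pi_div_two A B C).2 hright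
  have hcos := cos_angle_of_angle_eq_pi_div_two hright
  have huv : inner ℝ (A - B) (C - B) = 0 :=
    InnerProductGeometry.inner_eq_zero_iff_angle_eq_pi_div_two _ _ |>.2 hright
  have hvu : inner ℝ (C - B) (A - B) = 0 := by rw [real_inner_comm, huv]
  obtain ⟨t, ht⟩ : ∃ t, t = Real.cos (∠ B C A) ^ 2 := ⟨_, rfl⟩
  have htr : t * (dist A B ^ 2 + dist C B ^ 2) = dist C B ^ 2 := by
    have h : dist A B ^ 2 + dist C B ^ 2 = dist A C ^ 2 := by linarith
    have hpos : dist A C ^ 2 ≠ 0 := by rw [← h]; positivity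
    rw [h, ht, hcos, div_pow, div_mul_cancel₀ _ hpos]
  have hD' : D = AffineMap.lineMap A C (1 - t) := by
    rw [hD]
    apply orthogonalProjection_line_eq_lineMap
    have h1 : C - A = (C - B) - (A - B) := by abel
    have h2 : B - AffineMap.lineMap A C (1 - t) = -(t • (A - B) + (1 - t) • (C - B)) := by
      rw [AffineMap.lineMap_apply_module']; module
    rw [h1, h2, inner_sub_left]
    simp only [inner_neg_right, inner_add_right, inner_smul_right, huv, hvu,
      real_inner_self_eq_norm_sq, ← dist_eq_norm]
    linarith
  have hE' : E = AffineMap.lineMap B C (1 - t) := by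
    rw [hE]
    apply orthogonalProjection_line_eq_lineMap
    have h2 : D - AffineMap.lineMap B C (1 - t) = t • (A - B) := by
      rw [hD', AffineMap.lineMap_apply_module', AffineMap.lineMap_apply_module']; module
    rw [h2, inner_smul_right, hvu, mul_zero]
  have hDE : dist D E = dist A B * t := by
    have h2 : D - E = t • (A - B) := by
      rw [hD', hE', AffineMap.lineMap_apply_module', AffineMap.lineMap_apply_module']; module
    rw [dist_eq_norm, h2, norm_smul, ← dist_eq_norm, Real.norm_of_nonneg (ht ▸ sq_nonneg _),
      mul_comm]
  refine ⟨by rw [hDE, ht], ?_⟩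
  rw [Real.cos_two_mul, ← ht, hDE]
  field_simp
end
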